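/- Let σ be a saturation function, S its modified saturation function, f the associated vector field, and V₀ the function V₀(z,y) = ‖y‖² + ∫₀^{‖z‖} S(ξ)dξ + ∫₀^{‖z−y‖} S(ξ)dξ. Then V₀ is of class C¹, positive definite (V₀(0,0)=0 and V₀(z,y)>0 for (z,y)≠(0,0)), radially unbounded, and along every solution t↦(z(t),y(t)) of (T₀) one has (d/dt)V₀(z(t),y(t)) = −S(‖z(t)‖)² − ⟨y(t), f(z(t)) − f(z(t)−y(t))⟩, which is ≤ 0 and vanishes at time t only if (z(t),y(t)) = (0,0). -/

import Mathlib

open Real Filter MeasureTheory intervalIntegral RealInnerProductSpace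

noncomputable section

/-- A saturation function: odd, globally Lipschitz, sign-definite, with finite positive limits
of `σ` at `+∞` and of `σ ξ / ξ` at `0`, non-decreasing, differentiable on `(0,∞)` with
non-increasing derivative there. -/
def IsSaturation (σ : ℝ → ℝ) : Prop :=
  (∀ ξ, σ (-ξ) = -σ ξ) ∧
  (∃ L : NNReal, LipschitzWith L σ) ∧
  (∀ ξ : ℝ, ξ ≠ 0 → σ ξ * ξ > 0) ∧
  (∃ l > 0, Tendsto σ atTop (nhds l)) ∧
  (∃ l > 0, Tendsto (fun ξ => σ ξ / ξ) (nhdsWithin 0 {(0:ℝ)}ᶜ) (nhds l)) ∧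
  Monotone σ ∧
  DifferentiableOn ℝ σ (Set.Ioi 0) ∧
  AntitoneOn (deriv σ) (Set.Ioi 0)

/-- The modified saturation function `S` associated with `σ`:
`S ξ = (2/π) ∫_0^{π/2} sin v · σ(ξ sin v) dv`. -/
def modSat (σ : ℝ → ℝ) (ξ : ℝ) : ℝ :=
  (2 / Real.pi) * ∫ v in (0:ℝ)..(Real.pi / 2), Real.sin v * σ (ξ * Real.sin v)

abbrev E2 := EuclideanSpace ℝ (Fin 2)

open Classical in
/-- The radial vector field `f(z) = S(‖z‖) z / ‖z‖`, `f(0) = 0`. -/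
def fvec (σ : ℝ → ℝ) (z : E2) : E2 :=
  if z = 0 then 0 else (modSat σ ‖z‖ / ‖z‖) • z

/-- The Lyapunov function `V₀(z,y) = ‖y‖² + ∫₀^{‖z‖} S + ∫₀^{‖z-y‖} S`. -/
def V0 (σ : ℝ → ℝ) (z y : E2) : ℝ :=
  ‖y‖ ^ 2 + (∫ ξ in (0:ℝ)..‖z‖, modSat σ ξ) + ∫ ξ in (0:ℝ)..‖z - y‖, modSat σ ξ

/-- `(z, y)` solves the limit system `(T₀)`: `ż = y - f(z)`, `ẏ = -f(z)`, for `t ≥ 0`. -/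
def IsSolT0 (σ : ℝ → ℝ) (z y : ℝ → E2) : Prop :=
  ∀ t : ℝ, 0 ≤ t →
    HasDerivAt z (y t - fvec σ (z t)) t ∧ HasDerivAt y (-(fvec σ (z t))) t

theorem modSat_cont (σ : ℝ → ℝ) (hσ : IsSaturation σ) : Continuous (modSat σ) := by
  obtain ⟨_, ⟨L, hL⟩, _⟩ := hσ
  have hc := hL.continuous
  unfold modSat
  refine continuous_const.mul ?_
  apply intervalIntegral.continuous_parametric_intervalIntegral_of_continuous'
  simp only [Function.uncurry_def]
  fun_prop

theorem modSat_mono (σ : ℝ → ℝ) (hσ : IsSaturation σ) : Monotone (modSat σ) := by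
  obtain ⟨_, ⟨L, hL⟩, _, _, _, hm, _⟩ := hσ
  have hc := hL.continuous
  intro a b hab
  unfold modSat
  refine mul_le_mul_of_nonneg_left ?_ (by positivity)
  apply intervalIntegral.integral_mono_on (by positivity)
  · exact Continuous.intervalIntegrable (by fun_prop) _ _
  · exact Continuous.intervalIntegrable (by fun_prop) _ _
  · intro v hv
    have hs : 0 ≤ Real.sin v := Real.sin_nonneg_of_nonneg_of_le_pi hv.1 (by linarith [hv.2, Real.pi_pos])
    exact mul_le_mul_of_nonneg_left (hm (mul_le_mul_of_nonneg_right hab hs)) hs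

theorem modSat_zero (σ : ℝ → ℝ) (hσ : IsSaturation σ) : modSat σ 0 = 0 := by
  have h0 : σ 0 = 0 := by have := hσ.1 0; simp at this; linarith
  simp [modSat, h0]

theorem modSat_pos (σ : ℝ → ℝ) (hσ : IsSaturation σ) {x : ℝ} (hx : 0 < x) : 0 < modSat σ x := by
  obtain ⟨_, ⟨L, hL⟩, hp, _⟩ := hσ
  have hc := hL.continuous
  unfold modSat
  refine mul_pos (by positivity) ?_
  apply intervalIntegral.intervalIntegral_pos_of_pos_on
  · exact Continuous.intervalIntegrable (by fun_prop) _ _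
  · intro v hv
    have hs : 0 < Real.sin v := Real.sin_pos_of_pos_of_lt_pi hv.1 (by linarith [hv.2, Real.pi_pos])
    have h1 : 0 < x * Real.sin v := mul_pos hx hs
    exact mul_pos hs (pos_of_mul_pos_left (hp _ h1.ne') h1.le)
  · positivity

theorem modSat_nonneg (σ : ℝ → ℝ) (hσ : IsSaturation σ) {x : ℝ} (hx : 0 ≤ x) : 0 ≤ modSat σ x := by
  rw [← modSat_zero σ hσ]; exact modSat_mono σ hσ hx

theorem primS_deriv (σ : ℝ → ℝ) (hσ : IsSaturation σ) (x : ℝ) :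
    HasDerivAt (fun x => ∫ ξ in (0:ℝ)..x, modSat σ ξ) (modSat σ x) x :=
  (modSat_cont σ hσ).integral_hasStrictDerivAt 0 x |>.hasDerivAt

theorem primS_nonneg (σ : ℝ → ℝ) (hσ : IsSaturation σ) {x : ℝ} (hx : 0 ≤ x) :
    0 ≤ ∫ ξ in (0:ℝ)..x, modSat σ ξ :=
  intervalIntegral.integral_nonneg hx fun _ hu => modSat_nonneg σ hσ hu.1

theorem primS_pos (σ : ℝ → ℝ) (hσ : IsSaturation σ) {x : ℝ} (hx : 0 < x) :
    0 < ∫ ξ in (0:ℝ)..x, modSat σ ξ :=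
  intervalIntegral.intervalIntegral_pos_of_pos_on ((modSat_cont σ hσ).intervalIntegrable _ _)
    (fun _ hu => modSat_pos σ hσ hu.1) hx

theorem primS_lower (σ : ℝ → ℝ) (hσ : IsSaturation σ) {x : ℝ} (hx : 1 ≤ x) :
    modSat σ 1 * (x - 1) ≤ ∫ ξ in (0:ℝ)..x, modSat σ ξ := by
  have hi := fun a b => (modSat_cont σ hσ).intervalIntegrable (μ := volume) a b
  rw [← intervalIntegral.integral_add_adjacent_intervals (hi 0 1) (hi 1 x)]
  have h1 := primS_nonneg σ hσ zero_le_one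
  have h2 : ∫ ξ in (1:ℝ)..x, modSat σ 1 ≤ ∫ ξ in (1:ℝ)..x, modSat σ ξ :=
    intervalIntegral.integral_mono_on hx (by simp) (hi 1 x)
      fun u hu => modSat_mono σ hσ hu.1
  simp at h2
  linarith

theorem fvec_norm (σ : ℝ → ℝ) (hσ : IsSaturation σ) (z : E2) : ‖fvec σ z‖ = modSat σ ‖z‖ := by
  unfold fvec
  split_ifs with h
  · simp [h, modSat_zero σ hσ]
  · have : 0 < ‖z‖ := norm_pos_iff.2 h
    have h2 := modSat_nonneg σ hσ this.le
    rw [norm_smul, Real.norm_of_nonneg (by positivity)]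
    field_simp

theorem fvec_inner (σ : ℝ → ℝ) (hσ : IsSaturation σ) (z : E2) :
    ⟪fvec σ z, z⟫ = modSat σ ‖z‖ * ‖z‖ := by
  unfold fvec
  split_ifs with h
  · simp [h]
  · have : 0 < ‖z‖ := norm_pos_iff.2 h
    rw [real_inner_smul_left, real_inner_self_eq_norm_sq]
    field_simp

theorem fvec_cont (σ : ℝ → ℝ) (hσ : IsSaturation σ) : Continuous (fvec σ) := by
  rw [continuous_iff_continuousAt]
  intro z
  have hS := modSat_cont σ hσ
  by_cases h : z = 0
  · subst h
    have : fvec σ 0 = 0 := by simp [fvec]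
    rw [ContinuousAt, this, tendsto_zero_iff_norm_tendsto_zero]
    simp only [fvec_norm σ hσ]
    have h2 : Continuous fun z : E2 => modSat σ ‖z‖ := hS.comp continuous_norm
    simpa [modSat_zero σ hσ] using h2.tendsto 0
  · have h1 : ContinuousAt (fun z : E2 => (modSat σ ‖z‖ / ‖z‖) • z) z := by
      refine ContinuousAt.smul (ContinuousAt.div ?_ continuous_norm.continuousAt (by simpa using h))
        continuousAt_id
      exact (hS.comp continuous_norm).continuousAt
    refine h1.congr ?_
    filter_upwards [isOpen_ne.mem_nhds h] with w hw
    have hw : w ≠ 0 := hw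
    simp [fvec, hw]

theorem G_deriv (σ : ℝ → ℝ) (hσ : IsSaturation σ) (z : E2) :
    HasFDerivAt (fun z : E2 => ∫ ξ in (0:ℝ)..‖z‖, modSat σ ξ) (innerSL ℝ (fvec σ z)) z := by
  by_cases h : z = 0
  · subst h
    have h1 := primS_deriv σ hσ 0
    rw [modSat_zero σ hσ, hasDerivAt_iff_isLittleO] at h1
    have h2 : Tendsto (fun z : E2 => ‖z‖) (nhds 0) (nhds 0) := by
      simpa using (continuous_norm (E := E2)).tendsto 0
    have h3 := h1.comp_tendsto h2
    rw [hasFDerivAt_iff_isLittleO]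
    have : fvec σ 0 = 0 := by simp [fvec]
    simp only [this]
    have h4 : (fun x : E2 => ∫ ξ in (0:ℝ)..‖x‖, modSat σ ξ) =o[nhds 0] fun z : E2 => ‖z‖ := by
      simpa [Function.comp_def] using h3
    simpa using h4.of_norm_right
  · have hz : ‖z‖ ≠ 0 := by simpa using h
    have hn : HasFDerivAt (fun z : E2 => ‖z‖) (‖z‖⁻¹ • innerSL ℝ z) z := by
      have h1 := ((hasStrictFDerivAt_norm_sq z).hasFDerivAt).sqrt (by positivity)
      simp only [Real.sqrt_sq (norm_nonneg _)] at h1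
      refine h1.congr_fderiv (ContinuousLinearMap.ext fun w => ?_)
      change 1 / (2 * ‖z‖) * (2 • inner ℝ z w) = ‖z‖⁻¹ * inner ℝ z w
      rw [nsmul_eq_mul]
      push_cast
      field_simp
    have := (primS_deriv σ hσ ‖z‖).comp_hasFDerivAt z hn
    refine this.congr_fderiv (ContinuousLinearMap.ext fun w => ?_)
    change modSat σ ‖z‖ * (‖z‖⁻¹ * inner ℝ z w) = inner ℝ (fvec σ z) w
    rw [fvec, if_neg h, real_inner_smul_left]
    ring

theorem fvec_mono (σ : ℝ → ℝ) (hσ : IsSaturation σ) (z w : E2) :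
    0 ≤ ⟪z - w, fvec σ z - fvec σ w⟫ := by
  have h1 := fvec_inner σ hσ z
  have h2 := fvec_inner σ hσ w
  have h3 := real_inner_le_norm (fvec σ z) w
  have h4 := real_inner_le_norm (fvec σ w) z
  rw [fvec_norm σ hσ] at h3 h4
  have h5 : 0 ≤ (modSat σ ‖z‖ - modSat σ ‖w‖) * (‖z‖ - ‖w‖) := by
    rcases le_total ‖z‖ ‖w‖ with h | h
    · exact mul_nonneg_of_nonpos_of_nonpos (by linarith [modSat_mono σ hσ h]) (by linarith)
    · exact mul_nonneg (by linarith [modSat_mono σ hσ h]) (by linarith)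
  rw [real_inner_comm, inner_sub_left, inner_sub_right, inner_sub_right]
  nlinarith

theorem V0_deriv (σ : ℝ → ℝ) (hσ : IsSaturation σ) (p : E2 × E2) :
    HasFDerivAt (fun p : E2 × E2 => V0 σ p.1 p.2)
      (2 • (innerSL ℝ p.2).comp (ContinuousLinearMap.snd ℝ E2 E2)
        + (innerSL ℝ (fvec σ p.1)).comp (ContinuousLinearMap.fst ℝ E2 E2)
        + (innerSL ℝ (fvec σ (p.1 - p.2))).comp
          (ContinuousLinearMap.fst ℝ E2 E2 - ContinuousLinearMap.snd ℝ E2 E2)) p := by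
  unfold V0
  refine HasFDerivAt.add (HasFDerivAt.add ?_ ?_) ?_
  · have := (hasStrictFDerivAt_norm_sq p.2).hasFDerivAt.comp p
      (ContinuousLinearMap.snd ℝ E2 E2).hasFDerivAt
    exact this.congr_fderiv (ContinuousLinearMap.ext fun w => rfl)
  · exact (G_deriv σ hσ p.1).comp p (ContinuousLinearMap.fst ℝ E2 E2).hasFDerivAt
  · exact (G_deriv σ hσ (p.1 - p.2)).comp p
      (ContinuousLinearMap.fst ℝ E2 E2 - ContinuousLinearMap.snd ℝ E2 E2).hasFDerivAt

/-- `V₀` is `C¹`, positive definite, radially unbounded, and is a strict Lyapunov function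
for `(T₀)`: along solutions, `dV₀/dt = -S(‖z‖)² - ⟨y, f(z) - f(z-y)⟩ ≤ 0`, vanishing only
at the origin. -/
theorem stmt9 (σ : ℝ → ℝ) (hσ : IsSaturation σ) :
    ContDiff ℝ 1 (fun p : E2 × E2 => V0 σ p.1 p.2) ∧
    V0 σ 0 0 = 0 ∧
    (∀ z y : E2, (z, y) ≠ (0, 0) → 0 < V0 σ z y) ∧
    (∀ M : ℝ, ∃ r : ℝ, ∀ z y : E2, r ≤ ‖(z, y)‖ → M ≤ V0 σ z y) ∧
    (∀ z y : ℝ → E2, IsSolT0 σ z y → ∀ t : ℝ, 0 ≤ t →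
      HasDerivAt (fun s => V0 σ (z s) (y s))
        (-(modSat σ ‖z t‖) ^ 2 - ⟪y t, fvec σ (z t) - fvec σ (z t - y t)⟫) t ∧
      (-(modSat σ ‖z t‖) ^ 2 - ⟪y t, fvec σ (z t) - fvec σ (z t - y t)⟫ ≤ 0) ∧
      ((-(modSat σ ‖z t‖) ^ 2 - ⟪y t, fvec σ (z t) - fvec σ (z t - y t)⟫ = 0) →
        z t = 0 ∧ y t = 0)) := by
  refine ⟨?_, by simp [V0], ?_, ?_, ?_⟩
  · rw [contDiff_one_iff_hasFDerivAt]
    refine ⟨_, ?_, V0_deriv σ hσ⟩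
    have hf := fvec_cont σ hσ
    have hi : Continuous (innerSL ℝ : E2 → _) := (innerSL ℝ (E := E2)).continuous
    refine Continuous.add (Continuous.add ?_ ?_) ?_
    · exact ((hi.comp continuous_snd).clm_comp continuous_const).const_smul 2
    · exact (hi.comp (hf.comp continuous_fst)).clm_comp continuous_const
    · exact (hi.comp (hf.comp (continuous_fst.sub continuous_snd))).clm_comp continuous_const
  · intro z y hzy
    have h1 := primS_nonneg σ hσ (norm_nonneg z)
    have h2 := primS_nonneg σ hσ (norm_nonneg (z - y))
    unfold V0
    by_cases hy : y = 0
    · have hz : z ≠ 0 := fun h => hzy (by simp [h, hy])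
      have := primS_pos σ hσ (norm_pos_iff.2 hz)
      positivity
    · have := norm_pos_iff.2 hy
      positivity
  · intro M
    have hS := modSat_pos σ hσ one_pos
    refine ⟨max (max 1 M) (M / modSat σ 1 + 1), fun z y h => ?_⟩
    have h1 := primS_nonneg σ hσ (norm_nonneg z)
    have h2 := primS_nonneg σ hσ (norm_nonneg (z - y))
    simp only [Prod.norm_mk, max_le_iff] at h
    obtain ⟨⟨ha, hb⟩, hc⟩ := h
    unfold V0
    rcases max_choice ‖z‖ ‖y‖ with h | h <;> rw [h] at ha hb hc
    · have h3 := primS_lower σ hσ ha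
      have h4 : M ≤ modSat σ 1 * (‖z‖ - 1) := by
        rw [mul_comm, ← div_le_iff₀ hS]; linarith
      nlinarith [sq_nonneg ‖y‖]
    · nlinarith
  · intro z y hs t ht
    obtain ⟨hz, hy⟩ := hs t ht
    refine ⟨?_, ?_, ?_⟩
    · have := (V0_deriv σ hσ (z t, y t)).comp_hasDerivAt t (hz.prodMk hy)
      refine this.congr_deriv ?_
      have h1 := real_inner_self_eq_norm_sq (fvec σ (z t))
      rw [fvec_norm σ hσ] at h1
      change 2 • inner ℝ (y t) (-fvec σ (z t)) + inner ℝ (fvec σ (z t)) (y t - fvec σ (z t))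
        + inner ℝ (fvec σ (z t - y t)) ((y t - fvec σ (z t)) - -fvec σ (z t)) = _
      rw [sub_neg_eq_add, sub_add_cancel, inner_neg_right, inner_sub_right, inner_sub_right, h1,
        nsmul_eq_mul]
      push_cast
      rw [real_inner_comm (y t) (fvec σ (z t)), real_inner_comm (y t) (fvec σ (z t - y t))]
      ring
    · have := fvec_mono σ hσ (z t) (z t - y t)
      rw [sub_sub_cancel] at this
      nlinarith [sq_nonneg (modSat σ ‖z t‖)]
    · intro h
      have h0 := fvec_mono σ hσ (z t) (z t - y t)
      rw [sub_sub_cancel] at h0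
      have h1 : modSat σ ‖z t‖ = 0 := by nlinarith [sq_nonneg (modSat σ ‖z t‖)]
      have hz0 : z t = 0 := by
        by_contra hne
        exact (modSat_pos σ hσ (norm_pos_iff.2 hne)).ne' h1
      refine ⟨hz0, ?_⟩
      by_contra hne
      have hp := norm_pos_iff.2 hne
      have h2 := fvec_inner σ hσ (-y t)
      have h3 := mul_pos (modSat_pos σ hσ hp) hp
      have h4 : fvec σ 0 = 0 := by simp [fvec]
      rw [h1, hz0, h4, zero_sub, zero_sub, inner_neg_right, real_inner_comm] at h
      rw [norm_neg, inner_neg_right] at h2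
      linarith
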